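/- arXiv:2403.05505 — 2 statements merged into one kernel-verified Lean document; each statement's English description precedes it below -/
import Mathlib

section
/- Let H : ℝ^d × ℝ^d → ℝ be continuous with p ↦ H(x,p) convex for every x and H(x,0) = 0 for all x, and let L be its Lagrangian. Let K ⊆ ℝ^d be compact, R > 0, and set K̂ = {y : dist(y,K) ≤ R}. Then there exists a constant C > 0, depending only on H, K, R, such that for every x₀ ∈ K and every absolutely continuous curve x : [0,T₀) → ℝ^d with x(0) = x₀, taking values in the closed ball of radius R/2 around x₀, and satisfying ∫₀^t L(x(s),ẋ(s)) ds ≤ C₁ t for all t < T₀ (for some C₁ entering into C) together with the a.e. identity (1/2)|x(t) − x₀|² = ∫₀^t ⟨x(s) − x₀, ẋ(s)⟩ ds, one has (1/2)|x(t) − x₀|² ≤ C t for all t < T₀. In particular, if T₀ is the first exit time of x from the open ball of radius R/2 around x₀, then T₀ ≥ R²/(8C). -/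
/-!
Write `φ(t) = ½|x(t) - x₀|²`. As `x` is absolutely continuous, so is `φ`, with
`φ'(s) = ⟨x(s) - x₀, ẋ(s)⟩` for almost every `s`. Fenchel's inequality
`⟨p, v⟩ ≤ L(y, v) + H(y, p)` at `y = x(s)`, `p = x(s) - x₀`, `v = ẋ(s)` bounds this by
`L(x(s), ẋ(s)) + M`, where `M` bounds `H` on the compact set of pairs `(y, p)` with
`dist(y, K) ≤ R/2` and `|p| ≤ R/2`. Integrating, `φ(t) ≤ (C₁ + M) t`.
-/

open scoped RealInnerProductSpace
open MeasureTheory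

/-- The Lagrangian `L(x,v) = sup_p (⟨p,v⟩ − H(x,p))`, valued in `EReal`. -/
noncomputable def Lagrangian {d : ℕ}
    (H : EuclideanSpace ℝ (Fin d) → EuclideanSpace ℝ (Fin d) → ℝ)
    (x v : EuclideanSpace ℝ (Fin d)) : EReal :=
  ⨆ p : EuclideanSpace ℝ (Fin d), ((⟪p, v⟫ - H x p : ℝ) : EReal)

section AbsolutelyContinuous

variable {a b : ℝ}

theorem absolutelyContinuousOnInterval_of_dist_le {X Y : Type*} [PseudoMetricSpace X]
    [PseudoMetricSpace Y] {f : ℝ → X} {g : ℝ → Y} (hg : AbsolutelyContinuousOnInterval g a b)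
    (h : ∀ s ∈ Set.uIcc a b, ∀ t ∈ Set.uIcc a b, dist (f s) (f t) ≤ dist (g s) (g t)) :
    AbsolutelyContinuousOnInterval f a b := by
  refine squeeze_zero' (.of_forall fun E ↦ Finset.sum_nonneg fun i _ ↦ dist_nonneg) ?_ hg
  filter_upwards [Filter.mem_inf_of_right (Filter.mem_principal_self _)] with E hE
  exact Finset.sum_le_sum fun i hi ↦ h _ (hE.1 i hi).1 _ (hE.1 i hi).2

theorem absolutelyContinuousOnInterval_half_norm_sub_sq {E : Type*}
    [SeminormedAddCommGroup E] {x : ℝ → E} (hx : AbsolutelyContinuousOnInterval x a b)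
    (c : E) :
    AbsolutelyContinuousOnInterval (fun s ↦ 1 / 2 * ‖x s - c‖ ^ 2) a b := by
  have hnorm : AbsolutelyContinuousOnInterval (fun s ↦ ‖x s - c‖) a b :=
    absolutelyContinuousOnInterval_of_dist_le hx fun s _ t _ ↦
      (LipschitzWith.dist_le_mul lipschitzWith_one_norm _ _).trans_eq <| by simp
  simpa only [sq] using (hnorm.fun_mul hnorm).const_mul (1 / 2)

theorem absolutelyContinuousOnInterval_of_eq_add_integral {E : Type*} [NormedAddCommGroup E]
    [NormedSpace ℝ E] {x x' : ℝ → E} {c : E} (hx' : IntervalIntegrable x' volume a b)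
    (hx : ∀ t ∈ Set.uIcc a b, x t = c + ∫ s in a..t, x' s) :
    AbsolutelyContinuousOnInterval x a b := by
  have hint : ∀ t ∈ Set.uIcc a b, IntervalIntegrable x' volume a t := fun t ht ↦
    hx'.mono_set (Set.uIcc_subset_uIcc_left ht)
  refine absolutelyContinuousOnInterval_of_dist_le
    (hx'.norm.absolutelyContinuousOnInterval_intervalIntegral Set.left_mem_uIcc)
    fun s hs t ht ↦ ?_
  rw [hx s hs, hx t ht, dist_add_left, dist_eq_norm, Real.dist_eq,
    intervalIntegral.integral_interval_sub_left (hint s hs) (hint t ht),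
    intervalIntegral.integral_interval_sub_left (hint s hs).norm (hint t ht).norm]
  exact intervalIntegral.norm_integral_le_abs_integral_norm

theorem ae_hasDerivAt_of_eq_add_integral {E : Type*} [NormedAddCommGroup E] [NormedSpace ℝ E]
    [CompleteSpace E] {x x' : ℝ → E} {c : E} (hx' : IntervalIntegrable x' volume a b)
    (hx : ∀ t ∈ Set.uIcc a b, x t = c + ∫ s in a..t, x' s) :
    ∀ᵐ s, s ∈ Set.uIoc a b → HasDerivAt x (x' s) s := by
  have hne : ∀ᵐ s : ℝ, s ≠ max a b := Measure.ae_ne volume _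
  filter_upwards [hx'.ae_hasDerivAt_integral, hne] with s hs hsb hsab
  have hnhds : Set.uIcc a b ∈ nhds s := Icc_mem_nhds hsab.1 (hsab.2.lt_of_ne hsb)
  exact ((hs (mem_of_mem_nhds hnhds) a Set.left_mem_uIcc).const_add c).congr_of_eventuallyEq
    (Filter.eventually_of_mem hnhds hx)

theorem intervalIntegrable_of_ae_hasDerivAt {φ φ' : ℝ → ℝ}
    (hφ : AbsolutelyContinuousOnInterval φ a b)
    (hφ' : ∀ᵐ s, s ∈ Set.uIoc a b → HasDerivAt φ (φ' s) s) :
    IntervalIntegrable φ' volume a b := by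
  refine hφ.intervalIntegrable_deriv.congr_ae ((ae_restrict_iff' measurableSet_uIoc).2 ?_)
  filter_upwards [hφ'] with s hs hsab using (hs hsab).deriv

theorem integral_eq_sub_of_ae_hasDerivAt {φ φ' : ℝ → ℝ}
    (hφ : AbsolutelyContinuousOnInterval φ a b)
    (hφ' : ∀ᵐ s, s ∈ Set.uIoc a b → HasDerivAt φ (φ' s) s) :
    ∫ s in a..b, φ' s = φ b - φ a := by
  rw [← hφ.integral_deriv_eq_sub]
  refine intervalIntegral.integral_congr_ae ?_
  filter_upwards [hφ'] with s hs hsab using (hs hsab).deriv.symm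

theorem sub_le_integral_of_ae_hasDerivAt_of_le {φ φ' ψ : ℝ → ℝ} (hab : a ≤ b)
    (hφ : AbsolutelyContinuousOnInterval φ a b)
    (hφ' : ∀ᵐ s, s ∈ Set.uIoc a b → HasDerivAt φ (φ' s) s)
    (hψ : IntervalIntegrable ψ volume a b) (h : ∀ᵐ s, s ∈ Set.uIoc a b → φ' s ≤ ψ s) :
    φ b - φ a ≤ ∫ s in a..b, ψ s := by
  rw [← integral_eq_sub_of_ae_hasDerivAt hφ hφ', intervalIntegral.integral_of_le hab,
    intervalIntegral.integral_of_le hab]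
  rw [Set.uIoc_of_le hab] at h
  exact setIntegral_mono_on_ae (intervalIntegrable_of_ae_hasDerivAt hφ hφ').1 hψ.1
    measurableSet_Ioc h

end AbsolutelyContinuous

section Displacement

variable {E : Type*} [NormedAddCommGroup E] [InnerProductSpace ℝ E] {a b : ℝ} {x x' : ℝ → E}

theorem hasDerivAt_half_norm_sub_sq {s : ℝ} {v : E} (hx : HasDerivAt x v s) (c : E) :
    HasDerivAt (fun s ↦ 1 / 2 * ‖x s - c‖ ^ 2) ⟪x s - c, v⟫ s := by
  convert! (hx.sub_const c).norm_sq.const_mul (1 / 2) using 1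
  ring

theorem half_norm_sub_sq_le_integral_add {ℓ : ℝ → ℝ} {M : ℝ} (hab : a ≤ b)
    (hx : AbsolutelyContinuousOnInterval x a b)
    (hx' : ∀ᵐ s, s ∈ Set.uIoc a b → HasDerivAt x (x' s) s)
    (hℓ : IntervalIntegrable ℓ volume a b)
    (h : ∀ᵐ s, s ∈ Set.uIoc a b → ⟪x s - x a, x' s⟫ ≤ ℓ s + M) :
    1 / 2 * ‖x b - x a‖ ^ 2 ≤ (∫ s in a..b, ℓ s) + M * (b - a) := by
  have hderiv : ∀ᵐ s, s ∈ Set.uIoc a b →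
      HasDerivAt (fun s ↦ 1 / 2 * ‖x s - x a‖ ^ 2) ⟪x s - x a, x' s⟫ s := by
    filter_upwards [hx'] with s hs hsab using hasDerivAt_half_norm_sub_sq (hs hsab) (x a)
  calc 1 / 2 * ‖x b - x a‖ ^ 2 = 1 / 2 * ‖x b - x a‖ ^ 2 - 1 / 2 * ‖x a - x a‖ ^ 2 := by simp
    _ ≤ ∫ s in a..b, (ℓ s + M) :=
      sub_le_integral_of_ae_hasDerivAt_of_le hab
        (absolutelyContinuousOnInterval_half_norm_sub_sq hx (x a)) hderiv
        (hℓ.add intervalIntegrable_const) h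
    _ = (∫ s in a..b, ℓ s) + M * (b - a) := by
      rw [intervalIntegral.integral_add hℓ intervalIntegrable_const,
        intervalIntegral.integral_const, smul_eq_mul, mul_comm]

end Displacement

theorem lt_of_half_sq_le_mul {u r C t : ℝ} (hr : 0 ≤ r) (hC : 0 < C)
    (hu : 1 / 2 * u ^ 2 ≤ C * t) (ht : t < r ^ 2 / (2 * C)) : u < r := by
  rw [lt_div_iff₀ (by positivity)] at ht
  exact lt_of_pow_lt_pow_left₀ 2 hr (by linarith)

theorem exists_forall_mem_closedBall_le {E : Type*} [SeminormedAddCommGroup E] [ProperSpace E]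
    {H : E → E → ℝ} (hH : UpperSemicontinuous fun z : E × E ↦ H z.1 z.2) {K : Set E}
    (hK : IsCompact K) (r : ℝ) :
    ∃ M, ∀ x₀ ∈ K, ∀ y ∈ Metric.closedBall x₀ r, H y (y - x₀) ≤ M := by
  obtain ⟨M, hM⟩ := (hH.upperSemicontinuousOn _).bddAbove_of_isCompact
    ((hK.cthickening (r := r)).prod (isCompact_closedBall (0 : E) r))
  refine ⟨M, fun x₀ hx₀ y hy ↦ hM (Set.mem_image_of_mem (fun z : E × E ↦ H z.1 z.2)
    (Set.mk_mem_prod (a := y) (b := y - x₀) ?_ ?_))⟩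
  · exact Metric.mem_cthickening_of_dist_le y x₀ r K hx₀ hy
  · rwa [mem_closedBall_zero_iff, ← dist_eq_norm]

theorem lagrangian_le_coe_iff {d : ℕ}
    {H : EuclideanSpace ℝ (Fin d) → EuclideanSpace ℝ (Fin d) → ℝ}
    {x v : EuclideanSpace ℝ (Fin d)} {l : ℝ} :
    Lagrangian H x v ≤ l ↔ ∀ p, ⟪p, v⟫ - H x p ≤ l := by
  simp only [Lagrangian, iSup_le_iff, EReal.coe_le_coe_iff]

-- `∀ p, ⟪p, x' s⟫ - H (x s) p ≤ ℓ s` is `L(x(s), ẋ(s)) ≤ ℓ(s)` with the supremum unfolded.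
theorem displacement_control_of_low_cost_curves_general {E : Type*} [NormedAddCommGroup E]
    [InnerProductSpace ℝ E] [ProperSpace E] {H : E → E → ℝ}
    (hH : UpperSemicontinuous fun z : E × E ↦ H z.1 z.2) {K : Set E} (hK : IsCompact K)
    (R C₁ : ℝ) :
    ∃ C : ℝ, 0 < C ∧ ∀ (T₀ : ℝ) (x x' : ℝ → E) (ℓ : ℝ → ℝ), x 0 ∈ K →
      (∀ t, 0 ≤ t → t < T₀ → x t ∈ Metric.closedBall (x 0) (R / 2)) →
      (∀ t, 0 ≤ t → t < T₀ → IntervalIntegrable x' volume 0 t ∧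
        IntervalIntegrable ℓ volume 0 t ∧ x t = x 0 + ∫ s in (0 : ℝ)..t, x' s) →
      (∀ᵐ s, 0 ≤ s → s < T₀ → ∀ p, ⟪p, x' s⟫ - H (x s) p ≤ ℓ s) →
      (∀ t, 0 ≤ t → t < T₀ → ∫ s in (0 : ℝ)..t, ℓ s ≤ C₁ * t) →
      (∀ t, 0 ≤ t → t < T₀ → 1 / 2 * ‖x t - x 0‖ ^ 2 ≤ C * t) ∧
      (∀ t, 0 ≤ t → t < T₀ → t < R ^ 2 / (8 * C) → ‖x t - x 0‖ < R / 2) := by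
  obtain ⟨M, hM⟩ := exists_forall_mem_closedBall_le hH hK (R / 2)
  have hC : 0 < max (C₁ + M) 1 := lt_max_of_lt_right one_pos
  refine ⟨max (C₁ + M) 1, hC, fun T₀ x x' ℓ hx₀ hball hx hL hcost ↦ ?_⟩
  have hfenchel : ∀ᵐ s, 0 ≤ s → s < T₀ → ⟪x s - x 0, x' s⟫ ≤ ℓ s + M := by
    filter_upwards [hL] with s hs hs0 hsT
    linarith [hs hs0 hsT (x s - x 0), hM _ hx₀ _ (hball s hs0 hsT)]
  have hdisp : ∀ t, 0 ≤ t → t < T₀ → 1 / 2 * ‖x t - x 0‖ ^ 2 ≤ max (C₁ + M) 1 * t := by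
    intro t ht htT
    obtain ⟨hx', hℓ, -⟩ := hx t ht htT
    have hprim : ∀ τ ∈ Set.uIcc 0 t, x τ = x 0 + ∫ s in (0 : ℝ)..τ, x' s := by
      rw [Set.uIcc_of_le ht]
      exact fun τ hτ ↦ (hx τ hτ.1 (hτ.2.trans_lt htT)).2.2
    have hle : ∀ᵐ s, s ∈ Set.uIoc 0 t → ⟪x s - x 0, x' s⟫ ≤ ℓ s + M := by
      rw [Set.uIoc_of_le ht]
      filter_upwards [hfenchel] with s hs hst using hs hst.1.le (hst.2.trans_lt htT)
    calc 1 / 2 * ‖x t - x 0‖ ^ 2 ≤ (∫ s in (0 : ℝ)..t, ℓ s) + M * (t - 0) :=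
          half_norm_sub_sq_le_integral_add ht
            (absolutelyContinuousOnInterval_of_eq_add_integral hx' hprim)
            (ae_hasDerivAt_of_eq_add_integral hx' hprim) hℓ hle
      _ ≤ (C₁ + M) * t := by linarith [hcost t ht htT]
      _ ≤ max (C₁ + M) 1 * t := by gcongr; exact le_max_left _ _
  refine ⟨hdisp, fun t ht htT htR ↦ lt_of_half_sq_le_mul ?_ hC (hdisp t ht htT) ?_⟩
  · exact dist_nonneg.trans (hball t ht htT)
  · exact htR.trans_eq (by ring)

/-- **Control on the displacement of low-cost curves** (Lemma 5.13, Euclidean chart):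
there is `C > 0`, depending only on `H`, `K`, `R` (and the cost-rate `C₁`), such that
any absolutely continuous curve starting at `x₀ ∈ K`, staying in the closed ball of
radius `R/2` around `x₀`, with Lagrangian cost at most `C₁ t` and satisfying the
fundamental identity `½|x(t) − x₀|² = ∫₀ᵗ ⟨x(s) − x₀, ẋ(s)⟩ ds`, obeys
`½|x(t) − x₀|² ≤ C t`; in particular the curve cannot reach the boundary of the ball
of radius `R/2` before time `R²/(8C)`. -/
theorem displacement_control_of_low_cost_curves
    {d : ℕ} (H : EuclideanSpace ℝ (Fin d) → EuclideanSpace ℝ (Fin d) → ℝ)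
    (hHc : Continuous fun p : EuclideanSpace ℝ (Fin d) × EuclideanSpace ℝ (Fin d) => H p.1 p.2)
    (hconv : ∀ x, ConvexOn ℝ Set.univ (H x))
    (hH0 : ∀ x, H x 0 = 0)
    (K : Set (EuclideanSpace ℝ (Fin d))) (hK : IsCompact K)
    (R : ℝ) (hR : 0 < R)
    (C₁ : ℝ) (hC₁ : 0 ≤ C₁) :
    ∃ C : ℝ, 0 < C ∧ ∀ x₀ ∈ K, ∀ T₀ : ℝ, 0 < T₀ →
      ∀ (x x' : ℝ → EuclideanSpace ℝ (Fin d)) (ℓ : ℝ → ℝ),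
        x 0 = x₀ →
        (∀ t, 0 ≤ t → t < T₀ → x t ∈ Metric.closedBall x₀ (R/2)) →
        (∀ t, 0 ≤ t → t < T₀ → IntervalIntegrable x' volume 0 t ∧
          IntervalIntegrable ℓ volume 0 t ∧ x t = x 0 + ∫ s in (0:ℝ)..t, x' s) →
        (∀ s, 0 ≤ s → s < T₀ → (ℓ s : EReal) = Lagrangian H (x s) (x' s)) →
        (∀ t, 0 ≤ t → t < T₀ → (∫ s in (0:ℝ)..t, ℓ s) ≤ C₁ * t) →
        (∀ t, 0 ≤ t → t < T₀ →
          (1/2) * ‖x t - x₀‖^2 = ∫ s in (0:ℝ)..t, ⟪x s - x₀, x' s⟫) →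
        (∀ t, 0 ≤ t → t < T₀ → (1/2) * ‖x t - x₀‖^2 ≤ C * t) ∧
        (∀ t, 0 ≤ t → t < T₀ → t < R^2/(8*C) → ‖x t - x₀‖ < R/2) := by
  obtain ⟨C, hC, h⟩ :=
    displacement_control_of_low_cost_curves_general hHc.upperSemicontinuous hK R C₁
  refine ⟨C, hC, ?_⟩
  rintro _ hx₀ T₀ - x x' ℓ rfl hball hx hℓ hcost -
  exact h T₀ x x' ℓ hx₀ hball hx
    (.of_forall fun s hs hsT ↦ lagrangian_le_coe_iff.1 (hℓ s hs hsT).ge) hcost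
end

section
/- Let H : ℝ^d × ℝ^d → ℝ be continuous with p ↦ H(x,p) convex for every x and H(x,0) = 0 for all x, and let L be its Lagrangian. Suppose there is a C¹ good containment function Υ : ℝ^d → [0,∞) with compact sublevel sets and sup_z H(z, ∇Υ(z)) < ∞. Let f : ℝ^d → ℝ be bounded and continuously differentiable with c_f := sup_z (−H(z, ∇f(z))) < ∞. Then for every initial point x₀ ∈ ℝ^d there exists an absolutely continuous curve x : [0,∞) → ℝ^d with x(0) = x₀ such that for all t > 0: ∫₀^t H(x(s), ∇f(x(s))) ds + ∫₀^t L(x(s), ẋ(s)) ds = ∫₀^t ⟨∇f(x(s)), ẋ(s)⟩ ds. -/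
/-!
By Fenchel duality the Young equality holds along `x` exactly when
`ẋ(s) ∈ ∂ₚH(x(s), ∇f(x(s)))` for almost every `s`, so a global solution of this differential
inclusion is sought. The subdifferential is the intersection of the half-spaces
`⟪q, v⟫ ≤ H(x, ∇f(x) + q) - H(x, ∇f(x))`; taking `q = ∇Υ - ∇f` shows that `Υ - f`, which has compact
sublevel sets, grows at most linearly along solutions. Cutting the velocities off outside slowly
growing sublevel sets makes a pointwise choice of subgradients bounded, and its Euler schemes
converge along an ultrafilter. No continuity of the choice is needed: the limit curve inherits each
half-space inequality, because its right-hand side is continuous.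
-/

open scoped RealInnerProductSpace
open MeasureTheory

open Set Filter Topology

section Subgradients

lemma exists_supporting_continuousLinearMap {E : Type*} [AddCommGroup E] [Module ℝ E]
    [TopologicalSpace E] [IsTopologicalAddGroup E] [ContinuousSMul ℝ E] {φ : E → ℝ}
    (hφ : ConvexOn ℝ univ φ) (hc : Continuous φ) (p : E) :
    ∃ l : E →L[ℝ] ℝ, ∀ q, l q ≤ φ (p + q) - φ p := by
  have hopen : IsOpen {z : E × ℝ | z.1 ∈ univ ∧ φ z.1 < z.2} := by
    simpa using isOpen_lt (hc.comp continuous_fst) continuous_snd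
  obtain ⟨L, hL⟩ := geometric_hahn_banach_open_point hφ.convex_strict_epigraph hopen
    (x := (p, φ p)) (by simp)
  have hsplit (q : E) (r : ℝ) : L (q, r) = L (q, 0) + r * L (0, 1) := by
    rw [← smul_eq_mul, ← map_smul, ← map_add]
    simp
  have hneg : L (0, 1) < 0 := by
    have habove := hL (p, φ p + 1) (by simp)
    rw [hsplit, hsplit p (φ p)] at habove
    linarith
  have hgraph (q : E) : L (q, φ q) ≤ L (p, φ p) := by
    have hlim : Tendsto (fun r => L (q, r)) (𝓝[>] φ q) (𝓝 (L (q, φ q))) :=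
      (by fun_prop : Continuous fun r => L (q, r)).continuousWithinAt
    refine le_of_tendsto hlim ?_
    filter_upwards [self_mem_nhdsWithin] with r hr
    exact (hL (q, r) ⟨mem_univ q, hr⟩).le
  refine ⟨(-L (0, 1))⁻¹ • L.comp (ContinuousLinearMap.inl ℝ E ℝ), fun q => ?_⟩
  have hq := hgraph (p + q)
  rw [hsplit, hsplit p, show ((p + q, 0) : E × ℝ) = (p, 0) + (q, 0) by simp, map_add] at hq
  change (-L (0, 1))⁻¹ * L (q, 0) ≤ _
  rw [inv_mul_le_iff₀ (by linarith)]
  linarith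

variable {E : Type*} [NormedAddCommGroup E] [InnerProductSpace ℝ E]

/-- The vectors `v` whose linear functional `q ↦ ⟪q, v⟫` is dominated by `h`: an intersection of
closed half-spaces, which is how the velocity constraints of the differential inclusions below are
encoded. -/
def linearMinorants (h : E → ℝ) : Set E := {v | ∀ q, ⟪q, v⟫ ≤ h q}

/-- The subdifferential of `φ` at `p`, with subgradients identified with vectors through the inner
product. -/
def subdifferential (φ : E → ℝ) (p : E) : Set E := linearMinorants fun q => φ (p + q) - φ p

lemma subdifferential_nonempty [CompleteSpace E] {φ : E → ℝ} (hφ : ConvexOn ℝ univ φ)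
    (hc : Continuous φ) (p : E) : (subdifferential φ p).Nonempty := by
  obtain ⟨l, hl⟩ := exists_supporting_continuousLinearMap hφ hc p
  refine ⟨(InnerProductSpace.toDual ℝ E).symm l, fun q => ?_⟩
  rw [real_inner_comm, InnerProductSpace.toDual_symm_apply]
  exact hl q

lemma smul_mem_linearMinorants {h : E → ℝ} {v : E} {c : ℝ} (hc : 0 ≤ c)
    (hv : v ∈ linearMinorants h) : c • v ∈ linearMinorants (c • h) := fun q => by
  rw [real_inner_smul_right]
  exact mul_le_mul_of_nonneg_left (hv q) hc

lemma norm_le_of_mem_linearMinorants {h : E → ℝ} {v : E} {B : ℝ} (hv : v ∈ linearMinorants h)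
    (hB : ∀ q, ‖q‖ ≤ 1 → h q ≤ B) : ‖v‖ ≤ B := by
  have hunit : ‖‖v‖⁻¹ • v‖ ≤ 1 := by
    rw [norm_smul, norm_inv, norm_norm]
    exact inv_mul_le_one
  calc ‖v‖ = ⟪‖v‖⁻¹ • v, v⟫ := by
        rw [real_inner_smul_left, real_inner_self_eq_norm_mul_norm, ← mul_assoc]
        simp
    _ ≤ h (‖v‖⁻¹ • v) := hv _
    _ ≤ B := hB _ hunit

lemma exists_norm_le_of_mem_linearMinorants [ProperSpace E] {X : Type*} [TopologicalSpace X]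
    {h : X → E → ℝ} (hh : Continuous fun z : X × E => h z.1 z.2) {K : Set X} (hK : IsCompact K) :
    ∃ B, ∀ y ∈ K, ∀ v ∈ linearMinorants (h y), ‖v‖ ≤ B := by
  obtain ⟨B, hB⟩ :=
    (hK.prod (isCompact_closedBall (0 : E) 1)).bddAbove_image hh.continuousOn
  exact ⟨B, fun y hy v hv => norm_le_of_mem_linearMinorants hv fun q hq =>
    hB (mem_image_of_mem _ (mk_mem_prod hy (mem_closedBall_zero_iff.2 hq)))⟩

lemma lagrangian_eq_of_mem_subdifferential {d : ℕ}
    {H : EuclideanSpace ℝ (Fin d) → EuclideanSpace ℝ (Fin d) → ℝ} {x p v : EuclideanSpace ℝ (Fin d)}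
    (hv : v ∈ subdifferential (H x) p) : Lagrangian H x v = (⟪p, v⟫ - H x p : ℝ) := by
  refine le_antisymm (iSup_le fun q => EReal.coe_le_coe_iff.2 ?_)
    (le_iSup (fun q => ((⟪q, v⟫ - H x q : ℝ) : EReal)) p)
  have hq : ⟪q - p, v⟫ ≤ H x (p + (q - p)) - H x p := hv (q - p)
  rw [add_sub_cancel, inner_sub_left] at hq
  linarith

end Subgradients

section LipschitzCurves

lemma ae_differentiableAt_of_locallyLipschitzOn {E F : Type*} [NormedAddCommGroup E]
    [NormedSpace ℝ E] [FiniteDimensional ℝ E] [MeasurableSpace E] [BorelSpace E]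
    [NormedAddCommGroup F] [NormedSpace ℝ F] [FiniteDimensional ℝ F] {μ : Measure E}
    [μ.IsAddHaarMeasure] {f : E → F} {s : Set E} (hs : IsOpen s) (hf : LocallyLipschitzOn s f) :
    ∀ᵐ y ∂μ, y ∈ s → DifferentiableAt ℝ f y := by
  refine measure_null_of_locally_null _ fun y hy => ?_
  have hys : y ∈ s := (Classical.not_imp.1 hy).1
  obtain ⟨K, U, hU, hK⟩ := hf hys
  rw [hs.nhdsWithin_eq hys] at hU
  refine ⟨_, inter_mem_nhdsWithin _ (interior_mem_nhds.2 hU), measure_mono_null ?_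
    (hK.ae_differentiableWithinAt_of_mem (μ := μ))⟩
  rintro z ⟨hz, hzU⟩ hzK
  exact hz fun _ => (hzK (interior_subset hzU)).differentiableAt (mem_interior_iff_mem_nhds.1 hzU)

variable {E : Type*} [NormedAddCommGroup E] [NormedSpace ℝ E]

lemma intervalIntegrable_deriv_of_locallyLipschitzOn [CompleteSpace E] {x : ℝ → E}
    {a b : ℝ} (hx : LocallyLipschitzOn (uIcc a b) x) :
    IntervalIntegrable (deriv x) volume a b := by
  obtain ⟨K, hK⟩ := hx.exists_lipschitzOnWith_of_compact isCompact_uIcc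
  rw [intervalIntegrable_iff, uIoc, integrableOn_Ioc_iff_integrableOn_Ioo]
  refine Measure.integrableOn_of_bounded (M := K) (by simp) (aestronglyMeasurable_deriv x _) ?_
  filter_upwards [ae_restrict_mem measurableSet_Ioo] with s hs
  exact norm_deriv_le_of_lipschitzOn (Icc_mem_nhds hs.1 hs.2) hK

lemma integral_deriv_eq_sub_of_locallyLipschitzOn [FiniteDimensional ℝ E] {x : ℝ → E} {a b : ℝ}
    (hx : LocallyLipschitzOn (uIcc a b) x) : ∫ s in a..b, deriv x s = x b - x a := by
  obtain ⟨K, hK⟩ := hx.exists_lipschitzOnWith_of_compact isCompact_uIcc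
  refine (SeparatingDual.eq_iff_forall_dual_eq (R := ℝ)).2 fun l => ?_
  have hscalar : ∫ s in a..b, deriv (l ∘ x) s = l (x b) - l (x a) :=
    (l.lipschitz.comp_lipschitzOnWith hK).absolutelyContinuousOnInterval.integral_deriv_eq_sub
  rw [← l.intervalIntegral_comp_comm (intervalIntegrable_deriv_of_locallyLipschitzOn hx), map_sub,
    ← hscalar]
  refine intervalIntegral.integral_congr_ae ?_
  filter_upwards [hK.absolutelyContinuousOnInterval.boundedVariationOn
    |>.ae_differentiableAt_of_mem_uIcc] with s hs hsab
  exact (l.hasFDerivAt.comp_hasDerivAt s (hs (uIoc_subset_uIcc hsab)).hasDerivAt).deriv.symm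

lemma locallyLipschitzOn_comp {α β γ : Type*} [PseudoEMetricSpace α] [PseudoEMetricSpace β]
    [PseudoEMetricSpace γ] {g : β → γ} {f : α → β} {s : Set α} (hg : LocallyLipschitz g)
    (hf : LocallyLipschitzOn s f) : LocallyLipschitzOn s (g ∘ f) := by
  intro y hy
  obtain ⟨Kf, t, ht, hKf⟩ := hf hy
  obtain ⟨Kg, u, hu, hKg⟩ := hg (f y)
  exact ⟨Kg * Kf, t ∩ f ⁻¹' u, inter_mem ht (hf.continuousOn y hy hu),
    hKg.comp (hKf.mono inter_subset_left) ((mapsTo_preimage f u).mono_left inter_subset_right)⟩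

lemma le_add_mul_of_fderiv_deriv_le [FiniteDimensional ℝ E] {g : E → ℝ} (hg : ContDiff ℝ 1 g)
    {x : ℝ → E} {a b C : ℝ} (hab : a ≤ b) (hx : LocallyLipschitzOn (Icc a b) x)
    (hd : ∀ᵐ s ∂volume.restrict (Ioc a b), DifferentiableAt ℝ x s)
    (hC : ∀ᵐ s ∂volume.restrict (Ioc a b), fderiv ℝ g (x s) (deriv x s) ≤ C) :
    g (x b) ≤ g (x a) + C * (b - a) := by
  rw [← uIcc_of_le hab] at hx
  have hgx : LocallyLipschitzOn (uIcc a b) (g ∘ x) := locallyLipschitzOn_comp hg.locallyLipschitz hx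
  have hle : ∫ s in a..b, deriv (g ∘ x) s ≤ ∫ _ in a..b, C := by
    refine intervalIntegral.integral_mono_ae_restrict hab
      (intervalIntegrable_deriv_of_locallyLipschitzOn hgx) intervalIntegrable_const ?_
    rw [← restrict_Ioc_eq_restrict_Icc]
    filter_upwards [hd, hC] with s hds hCs
    rwa [((hg.differentiable one_ne_zero (x s)).hasFDerivAt.comp_hasDerivAt s
      hds.hasDerivAt).deriv]
  rw [integral_deriv_eq_sub_of_locallyLipschitzOn hgx, intervalIntegral.integral_const,
    smul_eq_mul] at hle
  simp only [Function.comp_apply] at hle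
  linarith

end LipschitzCurves

section EulerScheme

variable {E : Type*} [NormedAddCommGroup E] [NormedSpace ℝ E]

/-- The nodes of the explicit Euler scheme with step `δ` for the (possibly discontinuous)
time-dependent vector field `w`, started at `x₀`. -/
def eulerSeq (w : ℝ → E → E) (x₀ : E) (δ : ℝ) : ℕ → E
  | 0 => x₀
  | k + 1 => eulerSeq w x₀ δ k + δ • w (k * δ) (eulerSeq w x₀ δ k)

/-- The piecewise constant interpolation of the Euler scheme: its value at time `t ≥ 0` is the node
at the last grid time not exceeding `t`. -/
noncomputable def eulerCurve (w : ℝ → E → E) (x₀ : E) (δ t : ℝ) : E := eulerSeq w x₀ δ ⌊t / δ⌋₊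

variable {w : ℝ → E → E} {x₀ : E}

lemma eulerSeq_sub_eulerSeq (δ : ℝ) {j k : ℕ} (hjk : j ≤ k) :
    eulerSeq w x₀ δ k - eulerSeq w x₀ δ j
      = ∑ i ∈ Finset.Ico j k, δ • w (i * δ) (eulerSeq w x₀ δ i) := by
  rw [← Finset.sum_Ico_sub _ hjk]
  simp only [eulerSeq, add_sub_cancel_left]

lemma norm_eulerSeq_sub_le {δ M T : ℝ} (hδ : 0 ≤ δ) (hM : ∀ t ≤ T, ∀ y, ‖w t y‖ ≤ M) {j k : ℕ}
    (hjk : j ≤ k) (hk : k * δ ≤ T) :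
    ‖eulerSeq w x₀ δ k - eulerSeq w x₀ δ j‖ ≤ (k * δ - j * δ) * M := by
  rw [eulerSeq_sub_eulerSeq δ hjk]
  calc _ ≤ ∑ _i ∈ Finset.Ico j k, δ * M := by
        refine norm_sum_le_of_le _ fun i hi => ?_
        have hik : (i : ℝ) * δ ≤ k * δ := by gcongr; exact (Finset.mem_Ico.1 hi).2.le
        rw [norm_smul, Real.norm_of_nonneg hδ]
        gcongr
        exact hM _ (hik.trans hk) _
    _ = (k * δ - j * δ) * M := by
        rw [Finset.sum_const, Nat.card_Ico, nsmul_eq_mul, Nat.cast_sub hjk]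
        ring

lemma map_eulerSeq_sub_le {δ b : ℝ} (hδ : 0 ≤ δ) (ℓ : E →L[ℝ] ℝ) {j k : ℕ} (hjk : j ≤ k)
    (hb : ∀ i ∈ Finset.Ico j k, ℓ (w (i * δ) (eulerSeq w x₀ δ i)) ≤ b) :
    ℓ (eulerSeq w x₀ δ k - eulerSeq w x₀ δ j) ≤ (k * δ - j * δ) * b := by
  rw [eulerSeq_sub_eulerSeq δ hjk, map_sum]
  calc _ ≤ ∑ _i ∈ Finset.Ico j k, δ * b := by
        refine Finset.sum_le_sum fun i hi => ?_
        rw [map_smul, smul_eq_mul]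
        gcongr
        exact hb i hi
    _ = (k * δ - j * δ) * b := by
        rw [Finset.sum_const, Nat.card_Ico, nsmul_eq_mul, Nat.cast_sub hjk]
        ring

lemma floor_div_mul_le {δ t : ℝ} (hδ : 0 < δ) (ht : 0 ≤ t) : ⌊t / δ⌋₊ * δ ≤ t :=
  (le_div_iff₀ hδ).1 (Nat.floor_le (div_nonneg ht hδ.le))

lemma lt_floor_div_mul_add {δ : ℝ} (hδ : 0 < δ) (t : ℝ) : t < ⌊t / δ⌋₊ * δ + δ := by
  rw [← add_one_mul]
  exact (div_lt_iff₀ hδ).1 (Nat.lt_floor_add_one (t / δ))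

lemma tendsto_floor_div_mul {t : ℝ} (ht : 0 ≤ t) :
    Tendsto (fun δ : ℝ => ⌊t / δ⌋₊ * δ) (𝓝[>] 0) (𝓝 t) := by
  simpa [Function.comp_def, div_eq_mul_inv] using
    (tendsto_nat_floor_mul_div_atTop ht).comp tendsto_inv_nhdsGT_zero

lemma norm_eulerCurve_sub_le {δ M T s t : ℝ} (hδ : 0 < δ) (hM : ∀ t ≤ T, ∀ y, ‖w t y‖ ≤ M)
    (hs : 0 ≤ s) (hst : s ≤ t) (htT : t ≤ T) :
    ‖eulerCurve w x₀ δ t - eulerCurve w x₀ δ s‖ ≤ (⌊t / δ⌋₊ * δ - ⌊s / δ⌋₊ * δ) * M :=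
  norm_eulerSeq_sub_le hδ.le hM (by gcongr) ((floor_div_mul_le hδ (hs.trans hst)).trans htT)

@[simp]
lemma eulerCurve_zero (δ : ℝ) : eulerCurve w x₀ δ 0 = x₀ := by simp [eulerCurve, eulerSeq]

lemma exists_tendsto_eulerCurve [ProperSpace E] {l : Ultrafilter ℝ} (hl : l ≤ 𝓝[>] (0 : ℝ))
    {M t : ℝ} (ht : 0 ≤ t) (hM : ∀ s ≤ t, ∀ y, ‖w s y‖ ≤ M) :
    ∃ y, Tendsto (fun δ => eulerCurve w x₀ δ t) l (𝓝 y) := by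
  have hM₀ : 0 ≤ M := (norm_nonneg (w t x₀)).trans (hM t le_rfl x₀)
  have hball : ∀ᶠ δ in (l : Filter ℝ), eulerCurve w x₀ δ t ∈ Metric.closedBall x₀ (t * M) := by
    filter_upwards [hl self_mem_nhdsWithin] with δ (hδ : 0 < δ)
    rw [mem_closedBall_iff_norm]
    calc ‖eulerCurve w x₀ δ t - x₀‖ ≤ ⌊t / δ⌋₊ * δ * M := by
          simpa using norm_eulerCurve_sub_le (x₀ := x₀) hδ hM le_rfl ht le_rfl
      _ ≤ t * M := by gcongr; exact floor_div_mul_le hδ ht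
  obtain ⟨y, -, hy⟩ := (isCompact_closedBall x₀ (t * M)).ultrafilter_le_nhds
    (l.map fun δ => eulerCurve w x₀ δ t) (le_principal_iff.2 hball)
  exact ⟨y, hy⟩

variable {l : Filter ℝ} {x : ℝ → E}

lemma norm_sub_le_of_tendsto_eulerCurve [NeBot l] (hl : l ≤ 𝓝[>] 0)
    (hx : ∀ t, 0 ≤ t → Tendsto (fun δ => eulerCurve w x₀ δ t) l (𝓝 (x t))) {M T s t : ℝ}
    (hM : ∀ t ≤ T, ∀ y, ‖w t y‖ ≤ M) (hs : 0 ≤ s) (hst : s ≤ t) (htT : t ≤ T) :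
    ‖x t - x s‖ ≤ (t - s) * M := by
  have ht := hs.trans hst
  refine le_of_tendsto_of_tendsto ((hx t ht).sub (hx s hs)).norm
    ((((tendsto_floor_div_mul ht).mono_left hl).sub
      ((tendsto_floor_div_mul hs).mono_left hl)).mul_const M) ?_
  filter_upwards [hl self_mem_nhdsWithin] with δ (hδ : 0 < δ)
  exact norm_eulerCurve_sub_le hδ hM hs hst htT

lemma locallyLipschitzOn_of_tendsto_eulerCurve [NeBot l] (hl : l ≤ 𝓝[>] 0)
    (hw : ∀ T, ∃ M, ∀ t ≤ T, ∀ y, ‖w t y‖ ≤ M)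
    (hx : ∀ t, 0 ≤ t → Tendsto (fun δ => eulerCurve w x₀ δ t) l (𝓝 (x t))) :
    LocallyLipschitzOn (Ici 0) x := by
  intro t _
  obtain ⟨M, hM⟩ := hw (t + 1)
  have hM₀ : 0 ≤ M := (norm_nonneg (w t x₀)).trans (hM t (by linarith) x₀)
  refine ⟨M.toNNReal, Icc 0 (t + 1), ?_, LipschitzOnWith.of_dist_le_mul fun a ha b hb => ?_⟩
  · rw [← Ici_inter_Iic]
    exact inter_mem_nhdsWithin _ (Iic_mem_nhds (lt_add_one t))
  · rw [Real.coe_toNNReal M hM₀, mul_comm]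
    wlog hab : a ≤ b generalizing a b
    · rw [dist_comm (x a), dist_comm a]
      exact this b hb a ha (le_of_not_ge hab)
    rw [dist_comm (x a), dist_comm a, dist_eq_norm, Real.dist_eq, abs_of_nonneg (sub_nonneg.2 hab)]
    exact norm_sub_le_of_tendsto_eulerCurve hl hx hM ha.1 hab hb.2

lemma abs_sub_le_and_norm_eulerSeq_sub_eulerCurve_le {δ M T s h : ℝ} (hδ : 0 < δ)
    (hM : ∀ t ≤ T, ∀ y, ‖w t y‖ ≤ M) (hs : 0 ≤ s) (hh : 0 ≤ h) (hT : s + h ≤ T) {i : ℕ}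
    (hi : i ∈ Finset.Ico ⌊s / δ⌋₊ ⌊(s + h) / δ⌋₊) :
    |i * δ - s| ≤ h + δ ∧ ‖eulerSeq w x₀ δ i - eulerCurve w x₀ δ s‖ ≤ (h + δ) * M := by
  have hM₀ : 0 ≤ M := (norm_nonneg (w T x₀)).trans (hM T le_rfl x₀)
  obtain ⟨hsi, hih⟩ := Finset.mem_Ico.1 hi
  have hstep : s < ⌊s / δ⌋₊ * δ + δ := lt_floor_div_mul_add hδ s
  have hlower : ⌊s / δ⌋₊ * δ ≤ i * δ := by gcongr
  have hupper : i * δ ≤ s + h :=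
    le_trans (by gcongr) (floor_div_mul_le hδ (add_nonneg hs hh))
  refine ⟨abs_le.2 ⟨by linarith, by linarith⟩, ?_⟩
  calc _ ≤ (i * δ - ⌊s / δ⌋₊ * δ) * M := norm_eulerSeq_sub_le hδ.le hM hsi (hupper.trans hT)
    _ ≤ (h + δ) * M := by gcongr; linarith

/-- Convergence at the single time `s` controls all nodes at times near `s`, because the schemes
are equi-Lipschitz up to an error of one step. -/
lemma eventually_eulerSeq_mem_of_tendsto_eulerCurve (hl : l ≤ 𝓝[>] 0)
    (hw : ∀ T, ∃ M, ∀ t ≤ T, ∀ y, ‖w t y‖ ≤ M) {s : ℝ} (hs : 0 ≤ s) {y : E}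
    (hy : Tendsto (fun δ => eulerCurve w x₀ δ s) l (𝓝 y)) {U : Set (ℝ × E)} (hU : U ∈ 𝓝 (s, y)) :
    ∀ᶠ h in 𝓝[>] (0 : ℝ), ∀ᶠ δ in l, ∀ i ∈ Finset.Ico ⌊s / δ⌋₊ ⌊(s + h) / δ⌋₊,
      (i * δ, eulerSeq w x₀ δ i) ∈ U := by
  obtain ⟨r, hr, hball⟩ := Metric.mem_nhds_iff.1 hU
  obtain ⟨M, hM⟩ := hw (s + 1)
  have hsmall : ∀ᶠ h in 𝓝[>] (0 : ℝ), h * M < r :=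
    ((continuous_mul_const M).tendsto' 0 0 (zero_mul M) |>.eventually_lt_const hr).filter_mono
      nhdsWithin_le_nhds
  filter_upwards [hsmall, Ioo_mem_nhdsGT one_pos, Ioo_mem_nhdsGT hr]
    with h hhM ⟨hh₀, hh₁⟩ ⟨_, hhr⟩
  have hδ₀ : Tendsto id l (𝓝 (0 : ℝ)) := hl.trans nhdsWithin_le_nhds
  have htime : ∀ᶠ δ in l, h + δ < r :=
    (hδ₀.const_add h).eventually_lt_const (by simpa using hhr)
  have hspace : ∀ᶠ δ in l, (h + δ) * M + ‖eulerCurve w x₀ δ s - y‖ < r :=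
    (((hδ₀.const_add h).mul_const M).add (hy.sub_const y).norm).eventually_lt_const
      (by simpa using hhM)
  filter_upwards [hl self_mem_nhdsWithin, htime, hspace] with δ (hδ : 0 < δ) htimeδ hspaceδ i hi
  obtain ⟨hnear, hnode⟩ := abs_sub_le_and_norm_eulerSeq_sub_eulerCurve_le (x₀ := x₀) hδ hM hs
    hh₀.le (by linarith) hi
  refine hball (Metric.mem_ball.2 (max_lt (hnear.trans_lt htimeδ) ?_))
  rw [dist_eq_norm]
  linarith [norm_sub_le_norm_sub_add_norm_sub (eulerSeq w x₀ δ i) (eulerCurve w x₀ δ s) y]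

lemma map_deriv_le_of_tendsto_eulerCurve [NeBot l] (hl : l ≤ 𝓝[>] 0)
    (hw : ∀ T, ∃ M, ∀ t ≤ T, ∀ y, ‖w t y‖ ≤ M)
    (hx : ∀ t, 0 ≤ t → Tendsto (fun δ => eulerCurve w x₀ δ t) l (𝓝 (x t))) {s b : ℝ} (hs : 0 ≤ s)
    (hd : DifferentiableAt ℝ x s) (ℓ : E →L[ℝ] ℝ)
    (hb : ∀ᶠ z in 𝓝 (s, x s), ℓ (w z.1 z.2) ≤ b) : ℓ (deriv x s) ≤ b := by
  have hslope : Tendsto (fun h : ℝ => ℓ (h⁻¹ • (x (s + h) - x s))) (𝓝[>] 0) (𝓝 (ℓ (deriv x s))) :=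
    (ℓ.continuous.tendsto _).comp hd.hasDerivAt.tendsto_slope_zero_right
  refine le_of_tendsto hslope ?_
  filter_upwards [self_mem_nhdsWithin,
    eventually_eulerSeq_mem_of_tendsto_eulerCurve hl hw hs (hx s hs) hb] with h (hh : 0 < h) hnodes
  have hsh : 0 ≤ s + h := add_nonneg hs hh.le
  have hincr : ℓ (x (s + h) - x s) ≤ (s + h - s) * b := by
    refine le_of_tendsto_of_tendsto ((ℓ.continuous.tendsto _).comp ((hx _ hsh).sub (hx s hs)))
      ((((tendsto_floor_div_mul hsh).mono_left hl).sub
        ((tendsto_floor_div_mul hs).mono_left hl)).mul_const b) ?_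
    filter_upwards [hl self_mem_nhdsWithin, hnodes] with δ (hδ : 0 < δ) hnodesδ
    exact map_eulerSeq_sub_le hδ.le ℓ (by gcongr; linarith) hnodesδ
  rw [map_smul, smul_eq_mul, inv_mul_le_iff₀ hh]
  linarith

end EulerScheme

section DifferentialInclusions

variable {E : Type*} [NormedAddCommGroup E] [InnerProductSpace ℝ E] [FiniteDimensional ℝ E]

lemma exists_deriv_mem_linearMinorants_of_bounded {w : ℝ → E → E}
    (hw : ∀ T, ∃ M, ∀ t ≤ T, ∀ y, ‖w t y‖ ≤ M) {k : ℝ × E → E → ℝ}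
    (hk : ∀ q, UpperSemicontinuous fun z => k z q)
    (hwk : ∀ t y, w t y ∈ linearMinorants (k (t, y))) (x₀ : E) :
    ∃ x : ℝ → E, x 0 = x₀ ∧ LocallyLipschitzOn (Ici 0) x ∧ ∀ᵐ s ∂volume.restrict (Ioi 0),
      DifferentiableAt ℝ x s ∧ deriv x s ∈ linearMinorants (k (s, x s)) := by
  let l := Ultrafilter.of (𝓝[>] (0 : ℝ))
  have hl : l ≤ 𝓝[>] (0 : ℝ) := Ultrafilter.of_le _
  have hlim (t : ℝ) (ht : 0 ≤ t) : ∃ y, Tendsto (fun δ => eulerCurve w x₀ δ t) l (𝓝 y) :=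
    let ⟨_, hM⟩ := hw t
    exists_tendsto_eulerCurve hl ht hM
  choose! x hx using hlim
  have hlip : LocallyLipschitzOn (Ici 0) x := locallyLipschitzOn_of_tendsto_eulerCurve hl hw hx
  refine ⟨x, tendsto_nhds_unique (hx 0 le_rfl) (by simp), hlip, ?_⟩
  rw [ae_restrict_iff' measurableSet_Ioi]
  filter_upwards [ae_differentiableAt_of_locallyLipschitzOn isOpen_Ioi
    (hlip.mono Ioi_subset_Ici_self)] with s hds hs
  refine ⟨hds hs, fun q => le_of_forall_gt_imp_ge_of_dense fun b hb => ?_⟩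
  refine map_deriv_le_of_tendsto_eulerCurve hl hw hx (le_of_lt hs) (hds hs) (innerSL ℝ q) ?_
  filter_upwards [hk q (s, x s) b hb] with z hz
  exact (hwk z.1 z.2 q).trans hz.le

lemma exists_norm_smoothTransition_smul_le {G : E → ℝ} (hG : ∀ c, IsCompact {y | G y ≤ c})
    {R : ℝ → ℝ} (hR : Monotone R) {h : E → E → ℝ} (hh : Continuous fun z : E × E => h z.1 z.2)
    {v : E → E} (hv : ∀ y, v y ∈ linearMinorants (h y)) (T : ℝ) :
    ∃ M, ∀ t ≤ T, ∀ y, ‖Real.smoothTransition (1 + (R t - G y)) • v y‖ ≤ M := by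
  obtain ⟨B, hB⟩ := exists_norm_le_of_mem_linearMinorants hh (hG (1 + R T))
  refine ⟨max B 0, fun t ht y => ?_⟩
  rw [norm_smul, Real.norm_of_nonneg (Real.smoothTransition.nonneg _)]
  rcases le_or_gt (G y) (1 + R T) with hy | hy
  · exact (mul_le_of_le_one_left (norm_nonneg _) (Real.smoothTransition.le_one _)).trans
      ((hB y hy _ (hv y)).trans (le_max_left _ _))
  · rw [Real.smoothTransition.zero_of_nonpos (by linarith [hR ht]), zero_mul]
    exact le_max_right _ _

/-- The Lyapunov inequality `hC` is scaled by a factor in `[0, 1]` when the velocities are cut off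
outside the sublevel sets `{G ≤ G x₀ + C⁺ t}`, hence it still holds and shows that the cutoff is
never active along the solution. -/
theorem exists_deriv_mem_linearMinorants_of_gradient_le {h : E → E → ℝ}
    (hh : Continuous fun z : E × E => h z.1 z.2) (hne : ∀ y, (linearMinorants (h y)).Nonempty)
    {G : E → ℝ} (hG : ContDiff ℝ 1 G) (hGc : ∀ c, IsCompact {y | G y ≤ c}) {C : ℝ}
    (hC : ∀ y, h y (gradient G y) ≤ C) (x₀ : E) :
    ∃ x : ℝ → E, x 0 = x₀ ∧ LocallyLipschitzOn (Ici 0) x ∧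
      ∀ᵐ s ∂volume.restrict (Ioi 0), deriv x s ∈ linearMinorants (h (x s)) := by
  choose v hv using hne
  let R (t : ℝ) : ℝ := G x₀ + max C 0 * t
  have hR : Monotone R := fun s t hst => by dsimp only [R]; gcongr
  let χ (z : ℝ × E) : ℝ := Real.smoothTransition (1 + (R z.1 - G z.2))
  have hχ : Continuous χ := Real.smoothTransition.continuous.comp <| by
    have hGcont := hG.continuous
    fun_prop
  obtain ⟨x, hx₀, hlip, hder⟩ := exists_deriv_mem_linearMinorants_of_bounded
    (w := fun t y => χ (t, y) • v y) (k := fun z => χ z • h z.2)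
    (exists_norm_smoothTransition_smul_le hGc hR hh hv)
    (fun q => (hχ.mul (hh.comp (by fun_prop : Continuous fun z : ℝ × E =>
      (z.2, q)))).upperSemicontinuous)
    (fun t y => smul_mem_linearMinorants (Real.smoothTransition.nonneg _) (hv y)) x₀
  have hGC : ∀ᵐ s ∂volume.restrict (Ioi 0), fderiv ℝ G (x s) (deriv x s) ≤ max C 0 := by
    filter_upwards [hder] with s ⟨_, hs⟩
    calc fderiv ℝ G (x s) (deriv x s) = ⟪gradient G (x s), deriv x s⟫ := inner_gradient_left.symm
      _ ≤ χ (s, x s) * h (x s) (gradient G (x s)) := hs _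
      _ ≤ χ (s, x s) * max C 0 := by
        gcongr
        exacts [Real.smoothTransition.nonneg _, (hC _).trans (le_max_left _ _)]
      _ ≤ max C 0 :=
        mul_le_of_le_one_left (le_max_right _ _) (Real.smoothTransition.le_one _)
  have hgrowth (t : ℝ) (ht : 0 ≤ t) : G (x t) ≤ R t := by
    have hsub : Ioc 0 t ⊆ Ioi 0 := Ioc_subset_Ioi_self
    simpa [hx₀] using le_add_mul_of_fderiv_deriv_le hG ht (hlip.mono Icc_subset_Ici_self)
      (ae_restrict_of_ae_restrict_of_subset hsub (hder.mono fun _ hs => hs.1))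
      (ae_restrict_of_ae_restrict_of_subset hsub hGC)
  refine ⟨x, hx₀, hlip, ?_⟩
  filter_upwards [hder, ae_restrict_mem measurableSet_Ioi] with s ⟨_, hs⟩ hs₀
  have hχ₁ : χ (s, x s) = 1 :=
    Real.smoothTransition.one_of_one_le (by linarith [hgrowth s (le_of_lt hs₀)])
  simpa only [hχ₁, one_smul] using hs

end DifferentialInclusions

section YoungEquality

section Gradient

variable {E : Type*} [NormedAddCommGroup E] [InnerProductSpace ℝ E] [CompleteSpace E] {f g : E → ℝ}

lemma continuous_gradient_of_contDiff (hf : ContDiff ℝ 1 f) : Continuous (gradient f) :=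
  (InnerProductSpace.toDual ℝ E).symm.continuous.comp (hf.continuous_fderiv one_ne_zero)

lemma gradient_fun_sub {y : E} (hf : DifferentiableAt ℝ f y) (hg : DifferentiableAt ℝ g y) :
    gradient (fun z => f z - g z) y = gradient f y - gradient g y := by
  simp only [gradient, fderiv_fun_sub hf hg, map_sub]

end Gradient

lemma isCompact_sublevel_sub {X : Type*} [TopologicalSpace X] {f g : X → ℝ} (hf : Continuous f)
    (hg : Continuous g) (hfc : ∀ c, IsCompact {y | f y ≤ c}) {B : ℝ} (hB : ∀ y, g y ≤ B) (c : ℝ) :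
    IsCompact {y | f y - g y ≤ c} :=
  (hfc (c + B)).of_isClosed_subset (isClosed_le (hf.sub hg) continuous_const) fun y hy =>
    (sub_le_iff_le_add.1 hy).trans (add_le_add_right (hB y) c)

lemma intervalIntegrable_inner_of_continuousOn {E : Type*} [NormedAddCommGroup E]
    [InnerProductSpace ℝ E] [FiniteDimensional ℝ E] {p v : ℝ → E} {a b : ℝ}
    (hp : ContinuousOn p (uIcc a b)) (hv : IntervalIntegrable v volume a b) :
    IntervalIntegrable (fun s => ⟪p s, v s⟫) volume a b := by
  obtain ⟨M, hM⟩ := isCompact_uIcc.exists_bound_of_continuousOn hp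
  rw [intervalIntegrable_iff] at hv ⊢
  refine (innerSL ℝ).integrable_of_bilin_of_bdd_left M
    ((hp.mono uIoc_subset_uIcc).aestronglyMeasurable measurableSet_uIoc) ?_ hv
  filter_upwards [ae_restrict_mem measurableSet_uIoc] with s hs
  exact hM s (uIoc_subset_uIcc hs)

theorem global_existence_young_equality_general {d : ℕ}
    {H : EuclideanSpace ℝ (Fin d) → EuclideanSpace ℝ (Fin d) → ℝ}
    (hHc : Continuous fun z : EuclideanSpace ℝ (Fin d) × EuclideanSpace ℝ (Fin d) => H z.1 z.2)
    (hconv : ∀ y, ConvexOn ℝ univ (H y))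
    {p : EuclideanSpace ℝ (Fin d) → EuclideanSpace ℝ (Fin d)} (hp : Continuous p)
    {G : EuclideanSpace ℝ (Fin d) → ℝ} (hG : ContDiff ℝ 1 G)
    (hGc : ∀ c, IsCompact {y | G y ≤ c}) {C : ℝ}
    (hC : ∀ y, H y (p y + gradient G y) - H y (p y) ≤ C) (x₀ : EuclideanSpace ℝ (Fin d)) :
    ∃ (x x' : ℝ → EuclideanSpace ℝ (Fin d)) (ℓ : ℝ → ℝ),
      x 0 = x₀ ∧
      (∀ t : ℝ, 0 < t → IntervalIntegrable x' volume 0 t ∧ IntervalIntegrable ℓ volume 0 t) ∧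
      (∀ t : ℝ, 0 ≤ t → x t = x 0 + ∫ s in (0:ℝ)..t, x' s) ∧
      (∀ᵐ s ∂(volume.restrict (Ici (0:ℝ))), (ℓ s : EReal) = Lagrangian H (x s) (x' s)) ∧
      ∀ t : ℝ, 0 < t →
        (∫ s in (0:ℝ)..t, H (x s) (p (x s))) + (∫ s in (0:ℝ)..t, ℓ s)
          = ∫ s in (0:ℝ)..t, ⟪p (x s), x' s⟫ := by
  have hne (y) : (subdifferential (H y) (p y)).Nonempty :=
    subdifferential_nonempty (hconv y) (by fun_prop) (p y)
  obtain ⟨x, hx₀, hlip, hsub⟩ := exists_deriv_mem_linearMinorants_of_gradient_le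
    (h := fun y q => H y (p y + q) - H y (p y)) (by fun_prop) hne hG hGc hC x₀
  have hIcc (t : ℝ) (ht : 0 ≤ t) : uIcc 0 t ⊆ Ici 0 := uIcc_of_le ht ▸ Icc_subset_Ici_self
  have hderiv (t : ℝ) (ht : 0 ≤ t) : IntervalIntegrable (deriv x) volume 0 t :=
    intervalIntegrable_deriv_of_locallyLipschitzOn (hlip.mono (hIcc t ht))
  have hpx : ContinuousOn (fun s => p (x s)) (Ici 0) := hp.comp_continuousOn hlip.continuousOn
  have hinner (t : ℝ) (ht : 0 ≤ t) :
      IntervalIntegrable (fun s => ⟪p (x s), deriv x s⟫) volume 0 t :=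
    intervalIntegrable_inner_of_continuousOn (hpx.mono (hIcc t ht)) (hderiv t ht)
  have hHx (t : ℝ) (ht : 0 ≤ t) : IntervalIntegrable (fun s => H (x s) (p (x s))) volume 0 t :=
    ((hHc.comp_continuousOn (hlip.continuousOn.prodMk hpx)).mono (hIcc t ht)).intervalIntegrable
  refine ⟨x, deriv x, fun s => ⟪p (x s), deriv x s⟫ - H (x s) (p (x s)), hx₀,
    fun t ht => ⟨hderiv t ht.le, (hinner t ht.le).sub (hHx t ht.le)⟩, fun t ht => ?_, ?_,
    fun t ht => ?_⟩
  · rw [integral_deriv_eq_sub_of_locallyLipschitzOn (hlip.mono (hIcc t ht)), add_sub_cancel]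
  · rw [← restrict_Ioi_eq_restrict_Ici]
    filter_upwards [hsub] with s hs
    exact (lagrangian_eq_of_mem_subdifferential hs).symm
  · rw [intervalIntegral.integral_sub (hinner t ht.le) (hHx t ht.le), add_sub_cancel]

end YoungEquality

/-- **Global existence of optimally controlled curves** (Proposition 5.8, Euclidean
chart): if `H` is continuous, convex in `p`, with `H(x,0)=0`, admits a `C¹` good
containment function `Υ`, and `f` is bounded, `C¹`, with `c_f = sup_z(−Hf(z)) < ∞`,
then from every initial point there is a global absolutely continuous curve along which
the Young equality `∫₀ᵗ H(x,∇f(x)) + ∫₀ᵗ L(x,ẋ) = ∫₀ᵗ ⟨∇f(x), ẋ⟩` holds for all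
`t > 0` (the Lagrangian cost being represented along the curve by the real function `ℓ`). -/
theorem global_existence_young_equality
    {d : ℕ} (H : EuclideanSpace ℝ (Fin d) → EuclideanSpace ℝ (Fin d) → ℝ)
    (hHc : Continuous fun p : EuclideanSpace ℝ (Fin d) × EuclideanSpace ℝ (Fin d) => H p.1 p.2)
    (hconv : ∀ x, ConvexOn ℝ Set.univ (H x))
    (hH0 : ∀ x, H x 0 = 0)
    (Υ : EuclideanSpace ℝ (Fin d) → ℝ)
    (hΥreg : ContDiff ℝ 1 Υ) (hΥnn : ∀ x, 0 ≤ Υ x)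
    (hΥcompact : ∀ c : ℝ, IsCompact {x | Υ x ≤ c})
    (CH : ℝ) (hCH : ∀ z, H z (gradient Υ z) ≤ CH)
    (f : EuclideanSpace ℝ (Fin d) → ℝ)
    (hf : ContDiff ℝ 1 f) (hfb : ∃ Cf : ℝ, ∀ z, |f z| ≤ Cf)
    (cf : ℝ) (hcf : ∀ z, - H z (gradient f z) ≤ cf) :
    ∀ x₀ : EuclideanSpace ℝ (Fin d),
      ∃ (x x' : ℝ → EuclideanSpace ℝ (Fin d)) (ℓ : ℝ → ℝ),
        x 0 = x₀ ∧
        (∀ t : ℝ, 0 < t → IntervalIntegrable x' volume 0 t ∧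
          IntervalIntegrable ℓ volume 0 t) ∧
        (∀ t : ℝ, 0 ≤ t → x t = x 0 + ∫ s in (0:ℝ)..t, x' s) ∧
        (∀ᵐ s ∂(volume.restrict (Set.Ici (0:ℝ))),
          (ℓ s : EReal) = Lagrangian H (x s) (x' s)) ∧
        ∀ t : ℝ, 0 < t →
          (∫ s in (0:ℝ)..t, H (x s) (gradient f (x s))) + (∫ s in (0:ℝ)..t, ℓ s)
            = ∫ s in (0:ℝ)..t, ⟪gradient f (x s), x' s⟫ := by
  obtain ⟨Cf, hCf⟩ := hfb
  refine global_existence_young_equality_general (C := CH + cf) hHc hconv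
    (continuous_gradient_of_contDiff hf) (hΥreg.sub hf) (isCompact_sublevel_sub hΥreg.continuous
      hf.continuous hΥcompact fun z => (abs_le.1 (hCf z)).2) fun z => ?_
  rw [gradient_fun_sub (hΥreg.differentiable one_ne_zero z) (hf.differentiable one_ne_zero z),
    add_sub_cancel]
  linarith [hCH z, hcf z]
end
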